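/- arXiv:1208.1413 — 6 statements merged into one kernel-verified Lean document; each statement's English description precedes it below -/
import Mathlib

section
/- Let γ ∈ ℝ with |γ| > 1 and let B ⊂ ℝ be a finite set. Suppose (c_i)_{i≥1} is an optimal (γ,B)-representation of a number x ∈ J_{γ,B}. Then for every n ≥ 0, writing x_n = Σ_{i=1}^∞ c_{n+i}/γ^i for the n-th tail (so x_0 = x), the digit c_{n+1} satisfies: (i) γ·x_n − c_{n+1} ∈ J_{γ,B}, and (ii) |γ·x_n − c_{n+1}| ≤ |γ·x_n − b| for every b ∈ B such that γ·x_n − b ∈ J_{γ,B}. -/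
/-- A `(γ, B)`-representation of `x`: a sequence of digits `b i ∈ B` (here `b i` is the
digit `b_{i+1}` of the paper, i.e. sequences are 0-indexed) with `x = ∑_{i ≥ 1} b_i / γ^i`. -/
def IsRep (γ : ℝ) (B : Set ℝ) (b : ℕ → ℝ) (x : ℝ) : Prop :=
  (∀ i, b i ∈ B) ∧ HasSum (fun i : ℕ => b i / γ ^ (i + 1)) x

/-- `J_{γ,B}`: the set of real numbers admitting a `(γ,B)`-representation. -/
def RepSet (γ : ℝ) (B : Set ℝ) : Set ℝ := {x | ∃ b, IsRep γ B b x}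

/-- A `(γ,B)`-representation `c` of `x` is optimal if its partial sums approximate `x`
at least as well as those of any other `(γ,B)`-representation of `x`. -/
def IsOptimalRep (γ : ℝ) (B : Set ℝ) (c : ℕ → ℝ) (x : ℝ) : Prop :=
  IsRep γ B c x ∧ ∀ b : ℕ → ℝ, IsRep γ B b x → ∀ n : ℕ, 1 ≤ n →
    |x - ∑ i ∈ Finset.range n, c i / γ ^ (i + 1)| ≤
      |x - ∑ i ∈ Finset.range n, b i / γ ^ (i + 1)|

/-- The digit alphabet `{0, 1, …, M}` as a set of reals. -/
def digitSet (M : ℤ) : Set ℝ := (fun k : ℤ => (k : ℝ)) '' Set.Icc 0 M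

/-! Deleting the first digit of a representation of `x` gives a representation of `γ * x - b 0`,
and every representation of `γ * x - b` with `b ∈ B` arises in this way. Since this multiplies all
approximation errors by the same factor `γ`, it preserves optimality, so every tail of an optimal
representation is optimal; the inequality for the `n`-th digit is then the optimality of the
first partial sum of the `n`-th tail. -/

theorem mul_div_pow_succ_cancel {G : Type*} [CommGroupWithZero G] {γ : G} (hγ : γ ≠ 0) (a : G)
    (n : ℕ) :
    γ * (a / γ ^ (n + 1)) = a / γ ^ n := by
  rw [pow_succ', ← mul_div_assoc, mul_div_mul_left _ _ hγ]

section Field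

variable {K : Type*} [Field K] {γ : K}

theorem mul_sub_sum_range_succ_div_pow (hγ : γ ≠ 0) (b : ℕ → K) (x : K) (n : ℕ) :
    γ * (x - ∑ i ∈ Finset.range (n + 1), b i / γ ^ (i + 1)) =
      γ * x - b 0 - ∑ i ∈ Finset.range n, b (i + 1) / γ ^ (i + 1) := by
  rw [mul_sub, Finset.mul_sum]
  simp only [mul_div_pow_succ_cancel hγ]
  rw [Finset.sum_range_succ', pow_zero, div_one, sub_sub, add_comm (b 0)]

theorem hasSum_succ_div_pow_iff [TopologicalSpace K] [IsTopologicalRing K] (hγ : γ ≠ 0)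
    {b : ℕ → K} {x : K} :
    HasSum (fun i ↦ b (i + 1) / γ ^ (i + 1)) (γ * x - b 0) ↔
      HasSum (fun i ↦ b i / γ ^ (i + 1)) x := by
  conv_rhs => rw [← hasSum_mul_left_iff hγ, ← hasSum_nat_add_iff' 1]
  simp only [mul_div_pow_succ_cancel hγ, Finset.sum_range_one, pow_zero, div_one]

end Field

/-- The digit sequence with first digit `a` followed by the digits `b`. -/
def prependDigit {α : Type*} (a : α) (b : ℕ → α) : ℕ → α
  | 0 => a
  | i + 1 => b i

section Real

variable {γ : ℝ} {B : Set ℝ} {b c : ℕ → ℝ} {x : ℝ}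

theorem isRep_iff_isRep_tail (hγ : γ ≠ 0) :
    IsRep γ B b x ↔ b 0 ∈ B ∧ IsRep γ B (fun i ↦ b (i + 1)) (γ * x - b 0) := by
  rw [IsRep, IsRep, hasSum_succ_div_pow_iff hγ, ← Nat.and_forall_add_one, and_assoc]

theorem IsRep.prependDigit (hγ : γ ≠ 0) {a : ℝ} (ha : a ∈ B) (hb : IsRep γ B b (γ * x - a)) :
    IsRep γ B (prependDigit a b) x :=
  (isRep_iff_isRep_tail hγ).2 ⟨ha, hb⟩

theorem IsOptimalRep.abs_mul_sub_sum_le (hγ : γ ≠ 0) (hc : IsOptimalRep γ B c x)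
    (hb : IsRep γ B b x) (n : ℕ) :
    |γ * x - c 0 - ∑ i ∈ Finset.range n, c (i + 1) / γ ^ (i + 1)| ≤
      |γ * x - b 0 - ∑ i ∈ Finset.range n, b (i + 1) / γ ^ (i + 1)| := by
  rw [← mul_sub_sum_range_succ_div_pow hγ, ← mul_sub_sum_range_succ_div_pow hγ, abs_mul, abs_mul]
  exact mul_le_mul_of_nonneg_left (hc.2 b hb (n + 1) n.succ_pos) (abs_nonneg γ)

theorem IsOptimalRep.tail (hγ : γ ≠ 0) (hc : IsOptimalRep γ B c x) :
    IsOptimalRep γ B (fun i ↦ c (i + 1)) (γ * x - c 0) := by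
  obtain ⟨first_mem, tail_rep⟩ := (isRep_iff_isRep_tail hγ).1 hc.1
  exact ⟨tail_rep, fun _ hb n _ ↦ hc.abs_mul_sub_sum_le hγ (hb.prependDigit hγ first_mem) n⟩

theorem IsOptimalRep.abs_mul_sub_le (hγ : γ ≠ 0) (hc : IsOptimalRep γ B c x) {a : ℝ} (ha : a ∈ B)
    (hmem : γ * x - a ∈ RepSet γ B) : |γ * x - c 0| ≤ |γ * x - a| := by
  obtain ⟨b, hb⟩ := hmem
  simpa only [Finset.sum_range_zero, sub_zero, prependDigit] using
    hc.abs_mul_sub_sum_le hγ (hb.prependDigit hγ ha) 0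

theorem IsOptimalRep.drop (hγ : γ ≠ 0) (hc : IsOptimalRep γ B c x) (n : ℕ) :
    IsOptimalRep γ B (fun i ↦ c (n + i)) (∑' i : ℕ, c (n + i) / γ ^ (i + 1)) := by
  suffices ∃ y, IsOptimalRep γ B (fun i ↦ c (n + i)) y by
    obtain ⟨y, hy⟩ := this
    rwa [hy.1.2.tsum_eq]
  induction n with
  | zero => exact ⟨x, by simpa only [Nat.zero_add] using hc⟩
  | succ n ih =>
    obtain ⟨y, hy⟩ := ih
    exact ⟨_, by simpa only [Nat.add_assoc, Nat.add_comm 1] using hy.tail hγ⟩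

theorem optimal_digits_satisfy_optimal_transformation_general (hγ : γ ≠ 0)
    (hc : IsOptimalRep γ B c x) (n : ℕ) :
    (γ * (∑' i : ℕ, c (n + i) / γ ^ (i + 1)) - c n ∈ RepSet γ B) ∧
    (∀ b ∈ B, γ * (∑' i : ℕ, c (n + i) / γ ^ (i + 1)) - b ∈ RepSet γ B →
      |γ * (∑' i : ℕ, c (n + i) / γ ^ (i + 1)) - c n| ≤
        |γ * (∑' i : ℕ, c (n + i) / γ ^ (i + 1)) - b|) := by
  have drop_optimal := hc.drop hγ n
  exact ⟨⟨_, (drop_optimal.tail hγ).1⟩, fun _ ↦ drop_optimal.abs_mul_sub_le hγ⟩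

end Real

/-- if `(c_i)` is an optimal `(γ,B)`-representation of `x`, then for every `n ≥ 0`
the tail `x_n = ∑_{i ≥ 1} c_{n+i}/γ^i` satisfies: (i) `γ·x_n − c_{n+1} ∈ J_{γ,B}` and
(ii) `|γ·x_n − c_{n+1}| ≤ |γ·x_n − b|` for every `b ∈ B` with `γ·x_n − b ∈ J_{γ,B}`.
(In the 0-indexed setting, `c n` is the digit `c_{n+1}`.) -/
theorem optimal_digits_satisfy_optimal_transformation
    (γ : ℝ) (hγ : 1 < |γ|) (B : Set ℝ) (hB : B.Finite)
    (c : ℕ → ℝ) (x : ℝ) (hc : IsOptimalRep γ B c x) (n : ℕ) :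
    (γ * (∑' i : ℕ, c (n + i) / γ ^ (i + 1)) - c n ∈ RepSet γ B) ∧
    (∀ b ∈ B, γ * (∑' i : ℕ, c (n + i) / γ ^ (i + 1)) - b ∈ RepSet γ B →
      |γ * (∑' i : ℕ, c (n + i) / γ ^ (i + 1)) - c n| ≤
        |γ * (∑' i : ℕ, c (n + i) / γ ^ (i + 1)) - b|) :=
  optimal_digits_satisfy_optimal_transformation_general
    (abs_pos.1 (zero_lt_one.trans hγ)) hc n
end

section
/- Let β > 1 with β ∉ ℤ and let B = {0,1,…,⌈β⌉−1}. Then for every x ∈ [0,1), the digit ⌊βx⌋ is the unique element b ∈ B such that βx − b ∈ J_{β,B} and |βx − b| ≤ |βx − b′| for every b′ ∈ B with βx − b′ ∈ J_{β,B}. In other words, on [0,1) the optimal transformation coincides with the Rényi greedy transformation T(x) = βx − ⌊βx⌋. -/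
/-!
With non-negative digits and a positive base every representable number is non-negative, so an
admissible digit `b` satisfies `b ≤ βx`, and `|βx - b| = βx - b` is smallest for the largest
admissible digit. No integer digit `b ≤ βx` exceeds `⌊βx⌋`, and `⌊βx⌋` is itself admissible: its
remainder lies in `[0, 1)`, where the greedy expansion is a representation.
-/

theorem intCast_mem_digitSet {M k : ℤ} : (k : ℝ) ∈ digitSet M ↔ 0 ≤ k ∧ k ≤ M := by
  simp [digitSet]

theorem floor_mem_digitSet {M : ℤ} {y : ℝ} (hy : y ∈ Set.Ico (0 : ℝ) (M + 1)) :
    (⌊y⌋ : ℝ) ∈ digitSet M := by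
  refine intCast_mem_digitSet.2 ⟨Int.floor_nonneg.2 hy.1, Int.lt_add_one_iff.1 ?_⟩
  exact Int.floor_lt.2 (by exact_mod_cast hy.2)

theorem digitSet_subset_Ici (M : ℤ) : digitSet M ⊆ Set.Ici 0 := by
  rintro _ ⟨k, hk, rfl⟩
  exact Set.mem_Ici.2 (Int.cast_nonneg hk.1)

theorem repSet_subset_Ici {γ : ℝ} {B : Set ℝ} (hγ : 0 ≤ γ) (hB : B ⊆ Set.Ici 0) :
    RepSet γ B ⊆ Set.Ici 0 := by
  rintro x ⟨b, hb, hsum⟩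
  exact hsum.nonneg fun i => div_nonneg (hB (hb i)) (pow_nonneg hγ _)

/-- The Rényi greedy transformation `T(x) = βx - ⌊βx⌋`, on the whole real line. -/
noncomputable def greedyMap (β x : ℝ) : ℝ := Int.fract (β * x)

/-- The `i`-th digit `⌊β Tⁱ(x)⌋` of the greedy expansion of `x` in base `β`, indexed from `0`. -/
noncomputable def greedyDigit (β x : ℝ) (i : ℕ) : ℤ := ⌊β * (greedyMap β)^[i] x⌋

theorem iterate_greedyMap_mem_Ico (β : ℝ) {x : ℝ} (hx : x ∈ Set.Ico (0 : ℝ) 1) (n : ℕ) :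
    (greedyMap β)^[n] x ∈ Set.Ico (0 : ℝ) 1 :=
  have h_mapsTo : Set.MapsTo (greedyMap β) (Set.Ico 0 1) (Set.Ico 0 1) := fun _ _ =>
    ⟨Int.fract_nonneg _, Int.fract_lt_one _⟩
  h_mapsTo.iterate n hx

theorem mul_mem_Ico_of_mem_Ico_zero_one {β c x : ℝ} (hβ : 0 < β) (hc : β ≤ c)
    (hx : x ∈ Set.Ico (0 : ℝ) 1) : β * x ∈ Set.Ico 0 c :=
  ⟨mul_nonneg hβ.le hx.1, (mul_lt_of_lt_one_right hβ hx.2).trans_le hc⟩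

theorem greedyDigit_mem_digitSet {β x : ℝ} {M : ℤ} (hβ : 0 < β) (hM : β ≤ M + 1)
    (hx : x ∈ Set.Ico (0 : ℝ) 1) (i : ℕ) : (greedyDigit β x i : ℝ) ∈ digitSet M :=
  floor_mem_digitSet (mul_mem_Ico_of_mem_Ico_zero_one hβ hM (iterate_greedyMap_mem_Ico β hx i))

theorem greedyDigit_div_pow {β : ℝ} (hβ : β ≠ 0) (x : ℝ) (i : ℕ) :
    greedyDigit β x i / β ^ (i + 1) =
      (greedyMap β)^[i] x / β ^ i - (greedyMap β)^[i + 1] x / β ^ (i + 1) := by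
  rw [Function.iterate_succ_apply', greedyMap, Int.fract, greedyDigit]
  field_simp
  ring

theorem summable_iterate_greedyMap_div_pow {β : ℝ} (hβ : 1 < |β|) (x : ℝ) :
    Summable fun n : ℕ => (greedyMap β)^[n] x / β ^ n := by
  have h_geom : Summable fun n : ℕ => |β|⁻¹ ^ (n + 1) :=
    (summable_nat_add_iff 1).2
      (summable_geometric_of_lt_one (by positivity) (inv_lt_one_of_one_lt₀ hβ))
  refine (summable_nat_add_iff 1).1 (h_geom.of_norm_bounded fun n => ?_)
  rw [Function.iterate_succ_apply', greedyMap, norm_div, norm_pow, Real.norm_eq_abs,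
    Real.norm_eq_abs, Int.abs_fract, inv_pow, ← one_div]
  gcongr
  exact (Int.fract_lt_one _).le

theorem hasSum_greedyDigit {β : ℝ} (hβ : 1 < |β|) (x : ℝ) :
    HasSum (fun i : ℕ => greedyDigit β x i / β ^ (i + 1)) x := by
  have hβ_ne : β ≠ 0 := abs_pos.1 (zero_lt_one.trans hβ)
  have h_sum := (summable_iterate_greedyMap_div_pow hβ x).hasSum
  simp only [greedyDigit_div_pow hβ_ne]
  simpa using h_sum.sub ((hasSum_nat_add_iff' 1).2 h_sum)

theorem Ico_zero_one_subset_repSet {β : ℝ} {M : ℤ} (hβ : 1 < β) (hM : β ≤ M + 1) :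
    Set.Ico 0 1 ⊆ RepSet β (digitSet M) := fun x hx =>
  ⟨fun i => greedyDigit β x i, greedyDigit_mem_digitSet (zero_lt_one.trans hβ) hM hx,
    hasSum_greedyDigit (hβ.trans_le (le_abs_self β)) x⟩

theorem le_floor_of_mem_digitSet {M : ℤ} {b y : ℝ} (hb : b ∈ digitSet M) (hby : b ≤ y) :
    b ≤ ⌊y⌋ := by
  obtain ⟨k, -, rfl⟩ := hb
  exact Int.cast_le.2 (Int.le_floor.2 hby)

theorem abs_sub_minimal_iff_eq_floor {J : Set ℝ} {M : ℤ} {y : ℝ} (hJ₁ : Set.Ico 0 1 ⊆ J)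
    (hJ₀ : J ⊆ Set.Ici 0) (hy : y ∈ Set.Ico (0 : ℝ) (M + 1)) (b : ℝ) :
    (b ∈ digitSet M ∧ y - b ∈ J ∧ ∀ b' ∈ digitSet M, y - b' ∈ J → |y - b| ≤ |y - b'|) ↔
      b = ⌊y⌋ := by
  have h_floor_mem : (⌊y⌋ : ℝ) ∈ digitSet M := floor_mem_digitSet hy
  have h_floor_J : y - ⌊y⌋ ∈ J := hJ₁ ⟨Int.fract_nonneg y, Int.fract_lt_one y⟩
  have h_abs : ∀ {c : ℝ}, y - c ∈ J → |y - c| = y - c := fun hc => abs_of_nonneg (hJ₀ hc)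
  have h_le_floor : ∀ c ∈ digitSet M, y - c ∈ J → c ≤ ⌊y⌋ := fun c hc hcJ =>
    le_floor_of_mem_digitSet hc (sub_nonneg.1 (hJ₀ hcJ))
  constructor
  · rintro ⟨hb, hbJ, h_min⟩
    have h_dist := h_min _ h_floor_mem h_floor_J
    rw [h_abs hbJ, h_abs h_floor_J, sub_le_sub_iff_left] at h_dist
    exact (h_le_floor b hb hbJ).antisymm h_dist
  · rintro rfl
    refine ⟨h_floor_mem, h_floor_J, fun b' hb' hb'J => ?_⟩
    rw [h_abs h_floor_J, h_abs hb'J]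
    exact sub_le_sub_left (h_le_floor b' hb' hb'J) y

theorem optimal_transformation_eq_greedy_positive_base_general {β x : ℝ} {M : ℤ} (hβ : 1 < β)
    (hM : β ≤ M + 1) (hx : β * x ∈ Set.Ico (0 : ℝ) (M + 1)) (b : ℝ) :
    (b ∈ digitSet M ∧ β * x - b ∈ RepSet β (digitSet M) ∧
      ∀ b' ∈ digitSet M, β * x - b' ∈ RepSet β (digitSet M) → |β * x - b| ≤ |β * x - b'|)
    ↔ b = ⌊β * x⌋ :=
  abs_sub_minimal_iff_eq_floor (Ico_zero_one_subset_repSet hβ hM)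
    (repSet_subset_Ici (zero_le_one.trans hβ.le) (digitSet_subset_Ici M)) hx b

/-- for `β > 1`, `β ∉ ℤ`, and `B = {0,1,…,⌈β⌉−1}`, the digit `⌊βx⌋` is,
for every `x ∈ [0,1)`, the unique `b ∈ B` with `βx − b ∈ J_{β,B}` and
`|βx − b| ≤ |βx − b'|` for all `b' ∈ B` with `βx − b' ∈ J_{β,B}`; i.e. on `[0,1)` the
optimal transformation is the Rényi greedy transformation `T(x) = βx − ⌊βx⌋`. -/
theorem optimal_transformation_eq_greedy_positive_base
    (β : ℝ) (hβ : 1 < β) (hβZ : ∀ n : ℤ, β ≠ n) :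
    ∀ x ∈ Set.Ico (0 : ℝ) 1, ∀ b : ℝ,
      (b ∈ digitSet (⌈β⌉ - 1) ∧ β * x - b ∈ RepSet β (digitSet (⌈β⌉ - 1)) ∧
        ∀ b' ∈ digitSet (⌈β⌉ - 1), β * x - b' ∈ RepSet β (digitSet (⌈β⌉ - 1)) →
          |β * x - b| ≤ |β * x - b'|)
      ↔ b = (⌊β * x⌋ : ℝ) := by
  have hM : β ≤ (⌈β⌉ - 1 : ℤ) + 1 := by simpa using Int.le_ceil β
  exact fun x hx => optimal_transformation_eq_greedy_positive_base_general hβ hM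
    (mul_mem_Ico_of_mem_Ico_zero_one (zero_lt_one.trans hβ) hM hx)
end

section
/- Let β > 1 with β ∉ ℤ, let A = {0,1,…,⌊β⌋}, and set l = −β⌊β⌋/(β²−1), r = ⌊β⌋/(β²−1). Then J_{−β,A} = [l, r]; that is, a real number x has a (−β,A)-representation if and only if l ≤ x ≤ r. -/
/-!
If `B` lies in the ball of center `c` and radius `ρ`, comparing a `(γ, B)`-expansion with the
constant expansion `c / (γ - 1) = ∑_{i ≥ 1} c / γ ^ i` shows that `J_{γ,B}` lies in
the ball `S` of center `c / (γ - 1)` and radius `R = ρ / (|γ| - 1)`. Conversely, `S ⊆ J_{γ,B}` as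
soon as `γ S ⊆ B + S`: from `x ∈ S` one extracts digits by iterating `s ↦ γ s - d ∈ S`.
Since `γ S` is the translate by `c / (γ - 1)` of the ball of center `c` and radius `ρ + R`, this
inclusion says that the balls of radius `R` around the digits cover that ball. For the digits
`0, …, M` the radius is `R = (M / 2) / (|γ| - 1)`, and balls around consecutive integers leave no
gap once `R ≥ 1 / 2`, i.e. `|γ| ≤ M + 1`.
-/

open Metric

theorem hasSum_const_div_pow_succ {𝕜 : Type*} [NormedField 𝕜] {γ : 𝕜} (hγ : 1 < ‖γ‖) (c : 𝕜) :
    HasSum (fun i : ℕ => c / γ ^ (i + 1)) (c / (γ - 1)) := by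
  have hγ0 : γ ≠ 0 := norm_pos_iff.1 (one_pos.trans hγ)
  have hγ1 : γ - 1 ≠ 0 := sub_ne_zero.2 fun h => by simp [h] at hγ
  have hlt : ‖γ⁻¹‖ < 1 := by simpa only [norm_inv] using inv_lt_one_of_one_lt₀ hγ
  have hterm (i : ℕ) : c / γ ^ (i + 1) = c / γ * γ⁻¹ ^ i := by
    rw [inv_pow, pow_succ']
    field_simp
  have hvalue : c / (γ - 1) = c / γ * (1 - γ⁻¹)⁻¹ := by
    rw [show 1 - γ⁻¹ = (γ - 1) / γ by field_simp]
    field_simp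
  simpa only [hterm, hvalue] using (hasSum_geometric_of_norm_lt_one hlt).mul_left (c / γ)

theorem summable_div_pow_of_isBounded {𝕜 : Type*} [NormedField 𝕜] [CompleteSpace 𝕜] {γ : 𝕜}
    {S : Set 𝕜} {s : ℕ → 𝕜} (hγ : 1 < ‖γ‖) (hS : Bornology.IsBounded S) (hs : ∀ n, s n ∈ S) :
    Summable fun n => s n / γ ^ n := by
  obtain ⟨C, hC⟩ := hS.exists_norm_le
  have hgeom : Summable fun n : ℕ => C * ‖γ‖⁻¹ ^ n :=
    (summable_geometric_of_lt_one (by positivity) (inv_lt_one_of_one_lt₀ hγ)).mul_left C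
  refine hgeom.of_norm_bounded fun n => ?_
  rw [norm_div, norm_pow, inv_pow, ← div_eq_mul_inv]
  gcongr
  exact hC _ (hs n)

section GeneralDigits

variable {γ c ρ : ℝ} {B S : Set ℝ}

theorem repSet_subset_closedBall (hγ : 1 < |γ|) (hB : B ⊆ closedBall c ρ) :
    RepSet γ B ⊆ closedBall (c / (γ - 1)) (ρ / (|γ| - 1)) := by
  rintro x ⟨b, hb, hx⟩
  have hdiff := hx.sub (hasSum_const_div_pow_succ hγ c)
  have hbound : HasSum (fun i : ℕ => ρ / |γ| ^ (i + 1)) (ρ / (|γ| - 1)) :=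
    hasSum_const_div_pow_succ (by simpa using hγ) ρ
  rw [mem_closedBall_iff_norm]
  refine hdiff.norm_le_of_bounded hbound fun i => ?_
  have hbi : ‖b i - c‖ ≤ ρ := mem_closedBall_iff_norm.1 (hB (hb i))
  rw [← sub_div, norm_div, norm_pow, Real.norm_eq_abs γ]
  gcongr

theorem subset_repSet_of_forall_exists_mul_sub_mem (hγ : 1 < |γ|) (hS : Bornology.IsBounded S)
    (hstep : ∀ s ∈ S, ∃ d ∈ B, γ * s - d ∈ S) : S ⊆ RepSet γ B := by
  intro x hx
  choose! d hdB hdS using hstep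
  let s : ℕ → ℝ := fun n => (fun z => γ * z - d z)^[n] x
  have hs_succ (n : ℕ) : s (n + 1) = γ * s n - d (s n) := Function.iterate_succ_apply' ..
  have hs_mem (n : ℕ) : s n ∈ S := by
    induction n with
    | zero => exact hx
    | succ n ih => exact hs_succ n ▸ hdS _ ih
  have hsum := (summable_div_pow_of_isBounded hγ hS hs_mem).hasSum
  have hγ0 : γ ≠ 0 := abs_pos.1 (one_pos.trans hγ)
  have htelescope (n : ℕ) : d (s n) / γ ^ (n + 1) = s n / γ ^ n - s (n + 1) / γ ^ (n + 1) := by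
    rw [hs_succ, pow_succ]
    field_simp
    ring
  refine ⟨fun n => d (s n), fun n => hdB _ (hs_mem n), ?_⟩
  simp only [htelescope]
  simpa [s] using hsum.sub ((hasSum_nat_add_iff' 1).2 hsum)

theorem repSet_eq_closedBall_of_subset_iUnion (hγ : 1 < |γ|) (hB : B ⊆ closedBall c ρ)
    (hcover : closedBall c (ρ + ρ / (|γ| - 1)) ⊆ ⋃ d ∈ B, closedBall d (ρ / (|γ| - 1))) :
    RepSet γ B = closedBall (c / (γ - 1)) (ρ / (|γ| - 1)) := by
  refine (repSet_subset_closedBall hγ hB).antisymm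
    (subset_repSet_of_forall_exists_mul_sub_mem hγ isBounded_closedBall fun s hs => ?_)
  have hcenter : γ * (c / (γ - 1)) = c + c / (γ - 1) := by
    have hγ1 : γ - 1 ≠ 0 := sub_ne_zero.2 fun h => by simp [h] at hγ
    field_simp
    ring
  have hradius : |γ| * (ρ / (|γ| - 1)) = ρ + ρ / (|γ| - 1) := by
    have hγ1 : |γ| - 1 ≠ 0 := (sub_pos.2 hγ).ne'
    field_simp
    ring
  have hmem : γ * s - c / (γ - 1) ∈ closedBall c (ρ + ρ / (|γ| - 1)) := by
    rw [mem_closedBall_iff_norm] at hs ⊢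
    calc ‖γ * s - c / (γ - 1) - c‖ = ‖γ * (s - c / (γ - 1))‖ := by
          rw [mul_sub, hcenter]
          congr 1
          ring
      _ = |γ| * ‖s - c / (γ - 1)‖ := norm_mul ..
      _ ≤ |γ| * (ρ / (|γ| - 1)) := by gcongr
      _ = ρ + ρ / (|γ| - 1) := hradius
  obtain ⟨d, hd, hsd⟩ := Set.mem_iUnion₂.1 (hcover hmem)
  refine ⟨d, hd, ?_⟩
  rwa [mem_closedBall_iff_norm, sub_right_comm, ← mem_closedBall_iff_norm] at hsd

end GeneralDigits

section IntegerDigits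

variable {M : ℤ}

theorem digitSet_subset_closedBall (M : ℤ) : digitSet M ⊆ closedBall (M / 2 : ℝ) (M / 2) := by
  rintro _ ⟨k, ⟨hk0, hkM⟩, rfl⟩
  have hk0' : (0 : ℝ) ≤ k := Int.cast_nonneg hk0
  have hkM' : (k : ℝ) ≤ M := Int.cast_le.2 hkM
  rw [Real.closedBall_eq_Icc]
  constructor <;> linarith

theorem closedBall_subset_iUnion_digitSet {R : ℝ} (hM : 0 ≤ M) (hR : 1 / 2 ≤ R) :
    closedBall (M / 2 : ℝ) (M / 2 + R) ⊆ ⋃ d ∈ digitSet M, closedBall d R := by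
  intro y hy
  rw [Real.closedBall_eq_Icc] at hy
  obtain ⟨hy0, hyM⟩ := hy
  suffices ∃ k ∈ Set.Icc 0 M, |y - k| ≤ R by
    obtain ⟨k, hk, hyk⟩ := this
    exact Set.mem_biUnion (Set.mem_image_of_mem _ hk) hyk
  rcases le_or_gt y R with hyR | hRy
  · refine ⟨0, ⟨le_rfl, hM⟩, abs_le.2 ?_⟩
    constructor <;> push_cast <;> linarith
  · have hlower := Int.le_ceil (y - R)
    have hupper := Int.ceil_lt_add_one (y - R)
    refine ⟨⌈y - R⌉, ⟨Int.ceil_nonneg (by linarith), Int.ceil_le.2 (by linarith)⟩, abs_le.2 ?_⟩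
    constructor <;> linarith

theorem repSet_digitSet_eq_closedBall {γ : ℝ} (hγ : 1 < |γ|) (hM : |γ| ≤ M + 1) :
    RepSet γ (digitSet M) = closedBall (M / 2 / (γ - 1)) (M / 2 / (|γ| - 1)) := by
  have hM0 : 0 ≤ M := by
    have : (0 : ℝ) < M := by linarith
    exact_mod_cast this.le
  have hR : 1 / 2 ≤ (M / 2 / (|γ| - 1) : ℝ) := by
    rw [le_div_iff₀ (sub_pos.2 hγ)]
    linarith
  exact repSet_eq_closedBall_of_subset_iUnion hγ (digitSet_subset_closedBall M)
    (closedBall_subset_iUnion_digitSet hM0 hR)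

theorem repSet_neg_base_eq_Icc_general {β : ℝ} (hβ : 1 < β) (hM : β ≤ M + 1) :
    RepSet (-β) (digitSet M) = Set.Icc (-β * M / (β ^ 2 - 1)) (M / (β ^ 2 - 1)) := by
  have habs : |-β| = β := by rw [abs_neg, abs_of_pos (one_pos.trans hβ)]
  have hsub : β - 1 ≠ 0 := by linarith
  have hadd : β + 1 ≠ 0 := by linarith
  have hcenter : (M / 2 / (-β - 1) : ℝ) = -(M / 2 / (β + 1)) := by
    rw [← div_neg, neg_add']
  have hsq : β ^ 2 - 1 = (β - 1) * (β + 1) := by ring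
  rw [repSet_digitSet_eq_closedBall (habs.symm ▸ hβ) (habs.symm ▸ hM), habs,
    Real.closedBall_eq_Icc, hcenter, hsq]
  congr 1 <;> field_simp <;> ring

end IntegerDigits

/-- for `β > 1`, `β ∉ ℤ`, and `A = {0,1,…,⌊β⌋}`, the set of numbers with a
`(−β,A)`-representation is exactly the interval `[−β⌊β⌋/(β²−1), ⌊β⌋/(β²−1)]`. -/
theorem repSet_neg_base_eq_Icc
    (β : ℝ) (hβ : 1 < β) (hβZ : ∀ n : ℤ, β ≠ n) :
    RepSet (-β) (digitSet ⌊β⌋) =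
      Set.Icc (-β * ⌊β⌋ / (β ^ 2 - 1)) ((⌊β⌋ : ℝ) / (β ^ 2 - 1)) :=
  repSet_neg_base_eq_Icc_general hβ (Int.lt_floor_add_one β).le
end

section
/- Let β > 1 with β ∉ ℤ, let A = {0,1,…,⌊β⌋}, l = −β⌊β⌋/(β²−1), r = ⌊β⌋/(β²−1), and J = [l,r]. Let a, b ∈ A with a < b, and let x ∈ J be such that −βx − a ∈ J and −βx − b ∈ J. Then b = a + 1 and −βx ∈ [l + a + 1, r + a]. -/
/-!
If `y - a` and `y - b` both lie in `[l, r]`, then `b - a` is at most the length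
`r - l = ⌊β⌋ / (β - 1)`. For `β > 2` this length is less than `2`, so `b = a + 1`. For `β < 2` the
only digits are `0` and `1`. The range of `y` is the intersection of the translates `[l, r] + a` and
`[l, r] + b`.
-/

theorem div_sq_sub_one_sub_neg_mul_div_sq_sub_one {K : Type*} [Field K] {β : K}
    (hβ : β + 1 ≠ 0) (d : K) :
    d / (β ^ 2 - 1) - -β * d / (β ^ 2 - 1) = d / (β - 1) :=
  calc
    d / (β ^ 2 - 1) - -β * d / (β ^ 2 - 1) = d * (β + 1) / ((β - 1) * (β + 1)) := by
      rw [← sub_div]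
      congr 1 <;> ring
    _ = d / (β - 1) := mul_div_mul_right d (β - 1) hβ

section FloorRing

variable {K : Type*} [Field K] [LinearOrder K] [IsStrictOrderedRing K] [FloorRing K] {β : K}

theorem floor_div_sub_one_lt_two (hβ : 2 < β) : (⌊β⌋ : K) / (β - 1) < 2 := by
  rw [div_lt_iff₀ (by linarith)]
  rcases lt_or_ge β 3 with hlt | hge
  · have floor_le_two : ⌊β⌋ ≤ 2 := Int.lt_add_one_iff.mp (Int.floor_lt.mpr (by exact_mod_cast hlt))
    have : (⌊β⌋ : K) ≤ 2 := by exact_mod_cast floor_le_two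
    linarith
  · linarith only [Int.floor_le β, hge]

theorem eq_add_one_of_sub_le_floor_div_sub_one (hβ2 : β ≠ 2) {a b : ℤ} (hab : a < b)
    (hfloor : b - a ≤ ⌊β⌋) (hlength : (b - a : K) ≤ ⌊β⌋ / (β - 1)) : b = a + 1 := by
  by_contra hne
  have two_le_sub : 2 ≤ b - a := by lia
  have two_le_base : 2 ≤ β := by exact_mod_cast Int.le_floor.mp (two_le_sub.trans hfloor)
  have length_lt_two := floor_div_sub_one_lt_two (two_le_base.lt_of_ne' hβ2)
  have : (2 : K) ≤ b - a := by exact_mod_cast two_le_sub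
  linarith

theorem two_admissible_digits_neg_base_general (hβ : 1 < β) (hβ2 : β ≠ 2) {l r : K}
    (hl : l = -β * ⌊β⌋ / (β ^ 2 - 1)) (hr : r = ⌊β⌋ / (β ^ 2 - 1))
    {a b : ℤ} (hab : a < b) (hfloor : b - a ≤ ⌊β⌋) {y : K}
    (hya : y - a ∈ Set.Icc l r) (hyb : y - b ∈ Set.Icc l r) :
    b = a + 1 ∧ y ∈ Set.Icc (l + a + 1) (r + a) := by
  have length_eq : r - l = ⌊β⌋ / (β - 1) := by
    rw [hl, hr, div_sq_sub_one_sub_neg_mul_div_sq_sub_one (by linarith)]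
  have sub_le_length : (b - a : K) ≤ r - l := by
    simpa only [sub_sub_sub_cancel_left] using sub_le_sub hya.2 hyb.1
  obtain rfl : b = a + 1 :=
    eq_add_one_of_sub_le_floor_div_sub_one hβ2 hab hfloor (sub_le_length.trans_eq length_eq)
  rw [Int.cast_add, Int.cast_one] at hyb
  refine ⟨rfl, ?_, sub_le_iff_le_add.mp hya.2⟩
  rw [add_assoc]
  exact le_sub_iff_add_le.mp hyb.1

end FloorRing

/-- Lemma 2 of the paper: let `β > 1`, `β ∉ ℤ`, `A = {0,…,⌊β⌋}`,
`l = −β⌊β⌋/(β²−1)`, `r = ⌊β⌋/(β²−1)`, `J = [l,r]`. If `a, b ∈ A`, `a < b`, `x ∈ J`,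
and both `−βx − a ∈ J` and `−βx − b ∈ J`, then `b = a + 1` and `−βx ∈ [l+a+1, r+a]`. -/
theorem two_admissible_digits_neg_base
    (β : ℝ) (hβ : 1 < β) (hβZ : ∀ n : ℤ, β ≠ n)
    (l r : ℝ) (hl : l = -β * ⌊β⌋ / (β ^ 2 - 1)) (hr : r = (⌊β⌋ : ℝ) / (β ^ 2 - 1))
    (a b : ℤ) (ha : 0 ≤ a) (hb : b ≤ ⌊β⌋) (hab : a < b)
    (x : ℝ) (hx : x ∈ Set.Icc l r)
    (hxa : -β * x - a ∈ Set.Icc l r) (hxb : -β * x - b ∈ Set.Icc l r) :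
    b = a + 1 ∧ -β * x ∈ Set.Icc (l + a + 1) (r + a) :=
  two_admissible_digits_neg_base_general hβ (by exact_mod_cast hβZ 2) hl hr hab (by lia) hxa hxb
end

section
/- Let β > 1 with β ∉ ℤ and β ∉ (1,√3] ∪ (2,√5], let A = {0,1,…,⌊β⌋}, l = −β⌊β⌋/(β²−1), r = ⌊β⌋/(β²−1), and J = [l,r]. Define D : J → A by D(x) = 0 for x ∈ [−r/β, r], and D(x) = a for x ∈ [−a/β − r/β, −a/β − r/β + 1/β) for each a ∈ {1,…,⌊β⌋}. Then these intervals partition J, and for every x ∈ J the digit a = D(x) satisfies: (i) −βx − a ∈ J, and (ii) |−βx − a| ≤ |−βx − b| for every b ∈ A with −βx − b ∈ J. Consequently the optimal transformation is T_o(x) = −βx − D(x), mapping J to J. -/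
/-!
Put `y = -βx`. For `x ∈ J` one has `l ≤ y ≤ n + r`, where `n` is the largest digit, and the
prescribed digit is the least `a ≥ 0` with `y - a ≤ r`. Only the upper endpoint of `J` matters in
this choice: since `r - l ≥ 1`, the least such `a` does not push `y - a` below `l`. When
`2n + 1 ≤ β²`, that is `r ≤ 1/2`, replacing `a` by a larger digit moves `y - a ≤ 1/2` to the left by
at least `1`, which cannot bring it closer to `0`. The excluded intervals are where
`2⌊β⌋ + 1 ≤ β²` fails, up to their endpoints.
-/

section OptimalDigit

variable {R : Type*} [CommRing R] [LinearOrder R] [IsStrictOrderedRing R] [FloorRing R]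

/-- The least nonnegative integer `a` with `y - a ≤ r`. For `y = -βx` and `r` the right endpoint of
`J`, it is the digit `D(x)` of the optimal transformation. -/
def optimalDigit (r y : R) : ℤ := max 0 ⌈y - r⌉

theorem optimalDigit_le_iff {r y : R} {b : ℤ} :
    optimalDigit r y ≤ b ↔ 0 ≤ b ∧ y - b ≤ r := by
  rw [optimalDigit, max_le_iff, Int.ceil_le, sub_le_comm]

theorem optimalDigit_nonneg (r y : R) : 0 ≤ optimalDigit r y :=
  (optimalDigit_le_iff.1 le_rfl).1

theorem sub_optimalDigit_le (r y : R) : y - optimalDigit r y ≤ r :=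
  (optimalDigit_le_iff.1 le_rfl).2

theorem optimalDigit_eq_zero_iff {r y : R} : optimalDigit r y = 0 ↔ y ≤ r := by
  rw [optimalDigit, max_eq_left_iff, Int.ceil_le, Int.cast_zero, sub_nonpos]

theorem optimalDigit_eq_iff_of_pos {r y : R} {a : ℤ} (ha : 0 < a) :
    optimalDigit r y = a ↔ y - a ∈ Set.Ioc (r - 1) r := by
  have hmax : max 0 ⌈y - r⌉ = a ↔ ⌈y - r⌉ = a := by omega
  rw [optimalDigit, hmax, Int.ceil_eq_iff, Set.mem_Ioc, sub_le_comm]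
  exact and_congr_left' ⟨fun h ↦ by linarith, fun h ↦ by linarith⟩

theorem sub_optimalDigit_mem_Icc {l r y : R} (hlr : l ≤ r - 1) (hy : l ≤ y) :
    y - optimalDigit r y ∈ Set.Icc l r := by
  refine ⟨?_, sub_optimalDigit_le r y⟩
  rcases (optimalDigit_nonneg r y).eq_or_lt with hzero | hpos
  · rwa [← hzero, Int.cast_zero, sub_zero]
  · exact hlr.trans ((optimalDigit_eq_iff_of_pos hpos).1 rfl).1.le

end OptimalDigit

section NegativeBase

variable {K : Type*} [Field K] [LinearOrder K] [IsStrictOrderedRing K] {β c : K}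

theorem neg_mul_div_sq_sub_one_le (hβ : 1 < β) (hc : β ≤ c + 1) :
    -β * c / (β ^ 2 - 1) ≤ c / (β ^ 2 - 1) - 1 := by
  have hq : 0 < β ^ 2 - 1 := sub_pos.2 (one_lt_pow₀ hβ two_ne_zero)
  have hfactor : β ^ 2 - 1 ≤ c * (β + 1) :=
    calc β ^ 2 - 1 = (β - 1) * (β + 1) := by ring
      _ ≤ c * (β + 1) := by gcongr; linarith
  rw [div_sub_one hq.ne', div_le_div_iff_of_pos_right hq]
  linarith

theorem div_sq_sub_one_le_half (hβ : 1 < β) (hc : 2 * c + 1 ≤ β ^ 2) :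
    c / (β ^ 2 - 1) ≤ 1 / 2 := by
  rw [div_le_iff₀ (sub_pos.2 (one_lt_pow₀ hβ two_ne_zero))]
  linarith

theorem neg_mul_mem_Icc (hβ : 1 < β) {x : K}
    (hx : x ∈ Set.Icc (-β * c / (β ^ 2 - 1)) (c / (β ^ 2 - 1))) :
    -β * x ∈ Set.Icc (-β * c / (β ^ 2 - 1)) (c + c / (β ^ 2 - 1)) := by
  have hβneg : -β ≤ 0 := by linarith
  have hq : β ^ 2 - 1 ≠ 0 := (sub_pos.2 (one_lt_pow₀ hβ two_ne_zero)).ne'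
  constructor
  · calc -β * c / (β ^ 2 - 1) = -β * (c / (β ^ 2 - 1)) := mul_div_assoc ..
      _ ≤ -β * x := mul_le_mul_of_nonpos_left hx.2 hβneg
  · calc -β * x ≤ -β * (-β * c / (β ^ 2 - 1)) := mul_le_mul_of_nonpos_left hx.1 hβneg
      _ = c + c / (β ^ 2 - 1) := by field_simp; ring

theorem abs_sub_intCast_le_abs_sub_intCast {y : K} {a b : ℤ} (hya : y - a ≤ 1 / 2) (hab : a ≤ b) :
    |y - a| ≤ |y - b| := by
  rcases hab.eq_or_lt with rfl | hlt
  · rfl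
  · have hsucc : (a : K) + 1 ≤ b := mod_cast hlt
    exact (abs_le.2 ⟨by linarith, by linarith⟩ : |y - a| ≤ -(y - b)).trans (neg_le_abs _)

variable [FloorRing K]

theorem abs_sub_optimalDigit_le {r y : K} (hr : r ≤ 1 / 2) {b : ℤ} (hb : 0 ≤ b)
    (hyb : y - b ≤ r) : |y - optimalDigit r y| ≤ |y - b| :=
  abs_sub_intCast_le_abs_sub_intCast ((sub_optimalDigit_le r y).trans hr)
    (optimalDigit_le_iff.2 ⟨hb, hyb⟩)

theorem mem_Icc_iff_optimalDigit_eq_zero {r x : K} (hβ : 0 < β) (hx : x ≤ r) :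
    x ∈ Set.Icc (-r / β) r ↔ optimalDigit r (-β * x) = 0 := by
  rw [optimalDigit_eq_zero_iff, Set.mem_Icc, and_iff_left hx, div_le_iff₀ hβ, neg_le, neg_mul,
    mul_comm]

theorem mem_Ico_iff_optimalDigit_eq {r x : K} {a : ℤ} (hβ : 0 < β) (ha : 0 < a) :
    x ∈ Set.Ico (-(a : K) / β - r / β) (-(a : K) / β - r / β + 1 / β) ↔
      optimalDigit r (-β * x) = a := by
  rw [optimalDigit_eq_iff_of_pos ha, Set.mem_Ico, Set.mem_Ioc, ← sub_div, ← add_div,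
    div_le_iff₀ hβ, lt_div_iff₀ hβ, and_comm]
  exact ⟨fun ⟨_, _⟩ ↦ ⟨by linarith, by linarith⟩, fun ⟨_, _⟩ ↦ ⟨by linarith, by linarith⟩⟩

end NegativeBase

theorem two_mul_floor_add_one_le_sq {β : ℝ} (h3 : √3 ≤ β) (h5 : 2 ≤ β → √5 ≤ β) :
    2 * (⌊β⌋ : ℝ) + 1 ≤ β ^ 2 := by
  have hβ : 0 ≤ β := (Real.sqrt_nonneg 3).trans h3
  have hfloor : (⌊β⌋ : ℝ) ≤ β := Int.floor_le β
  rcases (by omega : ⌊β⌋ ≤ 1 ∨ ⌊β⌋ = 2 ∨ 3 ≤ ⌊β⌋) with h | h | h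
  · have hsq : 3 ≤ β ^ 2 := (Real.sqrt_le_left hβ).1 h3
    have : (⌊β⌋ : ℝ) ≤ 1 := mod_cast h
    linarith
  · rw [h, Int.cast_ofNat] at hfloor ⊢
    have hsq : 5 ≤ β ^ 2 := (Real.sqrt_le_left hβ).1 (h5 hfloor)
    linarith
  · have : (3 : ℝ) ≤ ⌊β⌋ := mod_cast h
    nlinarith

theorem optimal_transformation_neg_base_generic_general
    {K : Type*} [Field K] [LinearOrder K] [IsStrictOrderedRing K] [FloorRing K]
    (β : K) (n : ℤ) (hβ : 1 < β) (hn : β ≤ n + 1) (hnβ : 2 * (n : K) + 1 ≤ β ^ 2)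
    (l r : K) (hl : l = -β * n / (β ^ 2 - 1)) (hr : r = (n : K) / (β ^ 2 - 1))
    (Iv : ℤ → Set K)
    (hIv0 : Iv 0 = Set.Icc (-r / β) r)
    (hIv : ∀ a : ℤ, 1 ≤ a →
      Iv a = Set.Ico (-(a : K) / β - r / β) (-(a : K) / β - r / β + 1 / β)) :
    (∀ x ∈ Set.Icc l r, ∃! a : ℤ, 0 ≤ a ∧ a ≤ n ∧ x ∈ Iv a) ∧
    (∀ x ∈ Set.Icc l r, ∀ a : ℤ, 0 ≤ a → a ≤ n → x ∈ Iv a →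
      -β * x - a ∈ Set.Icc l r ∧
      ∀ b : ℤ, 0 ≤ b → b ≤ n → -β * x - b ∈ Set.Icc l r →
        |-β * x - a| ≤ |-β * x - b|) := by
  have hβ0 : 0 < β := zero_lt_one.trans hβ
  have hn0 : 0 ≤ n := by
    have : (0 : K) < n := by linarith
    exact_mod_cast this.le
  have hlr : l ≤ r - 1 := by rw [hl, hr]; exact neg_mul_div_sq_sub_one_le hβ hn
  have hr_half : r ≤ 1 / 2 := by rw [hr]; exact div_sq_sub_one_le_half hβ hnβ
  have hrange : ∀ x ∈ Set.Icc l r, -β * x ∈ Set.Icc l (n + r) := by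
    rw [hl, hr]; exact fun x ↦ neg_mul_mem_Icc hβ
  have hmem : ∀ x ∈ Set.Icc l r, ∀ a : ℤ, 0 ≤ a → (x ∈ Iv a ↔ optimalDigit r (-β * x) = a) := by
    intro x hx a ha
    rcases ha.eq_or_lt with rfl | hpos
    · rw [hIv0, mem_Icc_iff_optimalDigit_eq_zero hβ0 hx.2]
    · rw [hIv a hpos, mem_Ico_iff_optimalDigit_eq hβ0 hpos]
  constructor
  · intro x hx
    have hdigit_nonneg := optimalDigit_nonneg r (-β * x)
    have hdigit_le : optimalDigit r (-β * x) ≤ n :=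
      optimalDigit_le_iff.2 ⟨hn0, sub_le_iff_le_add'.2 (hrange x hx).2⟩
    exact ⟨_, ⟨hdigit_nonneg, hdigit_le, (hmem x hx _ hdigit_nonneg).2 rfl⟩,
      fun a ⟨ha, _, hxa⟩ ↦ ((hmem x hx a ha).1 hxa).symm⟩
  · intro x hx a ha _ hxa
    obtain rfl := (hmem x hx a ha).1 hxa
    exact ⟨sub_optimalDigit_mem_Icc hlr (hrange x hx).1,
      fun b hb _ hxb ↦ abs_sub_optimalDigit_le hr_half hb hxb.2⟩

/-- Proposition, first part: let `β > 1`, `β ∉ ℤ`,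
`β ∉ (1,√3] ∪ (2,√5]`, `l = −β⌊β⌋/(β²−1)`, `r = ⌊β⌋/(β²−1)`, `J = [l,r]`.
The intervals `Iv 0 = [−r/β, r]` and `Iv a = [−a/β − r/β, −a/β − r/β + 1/β)` for
`a ∈ {1,…,⌊β⌋}` partition `J`, and for `x ∈ J` the digit `a` with `x ∈ Iv a` satisfies
(i) `−βx − a ∈ J` and (ii) `|−βx − a| ≤ |−βx − b|` for all `b ∈ {0,…,⌊β⌋}` with
`−βx − b ∈ J`. Hence `T_o x = −βx − a` maps `J` to `J`. -/
theorem optimal_transformation_neg_base_generic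
    (β : ℝ) (hβ : 1 < β) (hβZ : ∀ n : ℤ, β ≠ n)
    (hβ35 : β ∉ Set.Ioc (1 : ℝ) (Real.sqrt 3) ∪ Set.Ioc (2 : ℝ) (Real.sqrt 5))
    (l r : ℝ) (hl : l = -β * ⌊β⌋ / (β ^ 2 - 1)) (hr : r = (⌊β⌋ : ℝ) / (β ^ 2 - 1))
    (Iv : ℤ → Set ℝ)
    (hIv0 : Iv 0 = Set.Icc (-r / β) r)
    (hIv : ∀ a : ℤ, 1 ≤ a →
      Iv a = Set.Ico (-(a : ℝ) / β - r / β) (-(a : ℝ) / β - r / β + 1 / β)) :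
    (∀ x ∈ Set.Icc l r, ∃! a : ℤ, 0 ≤ a ∧ a ≤ ⌊β⌋ ∧ x ∈ Iv a) ∧
    (∀ x ∈ Set.Icc l r, ∀ a : ℤ, 0 ≤ a → a ≤ ⌊β⌋ → x ∈ Iv a →
      -β * x - a ∈ Set.Icc l r ∧
      ∀ b : ℤ, 0 ≤ b → b ≤ ⌊β⌋ → -β * x - b ∈ Set.Icc l r →
        |-β * x - a| ≤ |-β * x - b|) := by
  have h3 : √3 < β := not_le.1 fun h ↦ hβ35 (.inl ⟨hβ, h⟩)
  have h5 (h2 : 2 ≤ β) : √5 < β :=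
    not_le.1 fun h ↦ hβ35 (.inr ⟨h2.lt_of_ne' (mod_cast hβZ 2), h⟩)
  exact optimal_transformation_neg_base_generic_general β ⌊β⌋ hβ (Int.lt_floor_add_one β).le
    (two_mul_floor_add_one_le_sq h3.le fun h2 ↦ (h5 h2).le) l r hl hr Iv hIv0 hIv
end

section
/- Let β ∈ (1,√3] ∪ (2,√5] with β ∉ ℤ, let l = −β⌊β⌋/(β²−1), r = ⌊β⌋/(β²−1), and {β} = β − ⌊β⌋. Then for every x in the open interval (−1/(2β), −{β}/(2β²)) one has both |x| > |x + {β}/β²| and x + {β}/β² ∈ [l/β², r/β²]. (Note x + {β}/β² = x − (1/(−β) + ⌊β⌋/(−β)²), so this exhibits a (−β,A)-representation of x beginning with digits 1, ⌊β⌋ whose second partial sum approximates x strictly better than 0.) -/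
/-! Both cases of the hypothesis on `β` amount to `β² ≤ 2⌊β⌋ + 1`, that is `1/2 ≤ r`, and since
`l = -β r` also to `l ≤ -β/2`. The range of `x` gives `-β/2 < β² x` and `2 β² x + {β} < 0`, so
`β² x + {β}` lies in `[-β/2, 1/2] ⊆ [l, r]` and is nearer to `0` than `β² x`. -/

section OrderedField

variable {𝕜 : Type*} [Field 𝕜] [LinearOrder 𝕜] [IsStrictOrderedRing 𝕜] {β d x : 𝕜}

lemma abs_add_lt_abs_of_lt_neg_half (hd : 0 < d) (hx : x < -d / 2) : |x + d| < |x| := by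
  have hx₀ : x < 0 := by linarith
  rw [abs_of_neg hx₀, abs_lt]
  constructor <;> linarith

lemma add_div_sq_mem_Icc (hβ : β ≠ 0) (hd₀ : 0 ≤ d) (hd₁ : d ≤ 1)
    (hx : x ∈ Set.Ioo (-1 / (2 * β)) (-d / (2 * β ^ 2))) :
    x + d / β ^ 2 ∈ Set.Icc (-(β / 2) / β ^ 2) (1 / 2 / β ^ 2) := by
  have lower_eq : -(β / 2) / β ^ 2 = -1 / (2 * β) := by field_simp
  have upper_eq : -d / (2 * β ^ 2) + d / β ^ 2 = d / 2 / β ^ 2 := by field_simp; ring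
  constructor
  · calc -(β / 2) / β ^ 2 = -1 / (2 * β) := lower_eq
      _ ≤ x := hx.1.le
      _ ≤ x + d / β ^ 2 := le_add_of_nonneg_right (by positivity)
  · calc x + d / β ^ 2 ≤ -d / (2 * β ^ 2) + d / β ^ 2 := by gcongr; exact hx.2.le
      _ = d / 2 / β ^ 2 := upper_eq
      _ ≤ 1 / 2 / β ^ 2 := by gcongr

lemma half_le_div_sq_sub_one {a : 𝕜} (hβ : 1 < β ^ 2) (ha : β ^ 2 ≤ 2 * a + 1) :
    1 / 2 ≤ a / (β ^ 2 - 1) := by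
  rw [le_div_iff₀ (sub_pos.2 hβ)]
  linarith

end OrderedField

lemma sq_le_two_mul_floor_add_one {β : ℝ} {n : ℕ} (hn : n ≤ β) (hβ : β ≤ √(2 * n + 1)) :
    β ^ 2 ≤ 2 * ⌊β⌋ + 1 := by
  have sq_le : β ^ 2 ≤ 2 * n + 1 := (Real.le_sqrt (n.cast_nonneg.trans hn) (by positivity)).1 hβ
  have le_floor : (n : ℝ) ≤ ⌊β⌋ := mod_cast Int.le_floor.2 (mod_cast hn : ((n : ℤ) : ℝ) ≤ β)
  linarith

/-- for `β ∈ (1,√3] ∪ (2,√5]`, `β ∉ ℤ`, `l = −β⌊β⌋/(β²−1)`,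
`r = ⌊β⌋/(β²−1)`, `{β} = β − ⌊β⌋`: every `x ∈ (−1/(2β), −{β}/(2β²))` satisfies both
`|x| > |x + {β}/β²|` and `x + {β}/β² ∈ [l/β², r/β²]`. -/
theorem better_competitor_exists_case1
    (β : ℝ) (hβ : β ∈ Set.Ioc (1 : ℝ) (Real.sqrt 3) ∪ Set.Ioc (2 : ℝ) (Real.sqrt 5))
    (hβZ : ∀ n : ℤ, β ≠ n)
    (l r : ℝ) (hl : l = -β * ⌊β⌋ / (β ^ 2 - 1)) (hr : r = (⌊β⌋ : ℝ) / (β ^ 2 - 1)) :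
    ∀ x ∈ Set.Ioo (-1 / (2 * β)) (-(β - ⌊β⌋) / (2 * β ^ 2)),
      |x + (β - ⌊β⌋) / β ^ 2| < |x| ∧
      x + (β - ⌊β⌋) / β ^ 2 ∈ Set.Icc (l / β ^ 2) (r / β ^ 2) := by
  have one_lt : 1 < β := hβ.elim (fun h ↦ h.1) fun h ↦ one_lt_two.trans h.1
  have sq_le : β ^ 2 ≤ 2 * ⌊β⌋ + 1 := by
    rcases hβ with ⟨h₁, h₃⟩ | ⟨h₂, h₅⟩
    · exact sq_le_two_mul_floor_add_one (n := 1) (by simpa using h₁.le) (by norm_num; exact h₃)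
    · exact sq_le_two_mul_floor_add_one (n := 2) (by simpa using h₂.le) (by norm_num; exact h₅)
  have half_le : 1 / 2 ≤ r := hr ▸ half_le_div_sq_sub_one (one_lt_pow₀ one_lt two_ne_zero) sq_le
  have le_neg_half : l ≤ -(β / 2) := by
    calc l = -β * r := by rw [hl, hr, mul_div_assoc]
      _ ≤ -β * (1 / 2) := mul_le_mul_of_nonpos_left half_le (by linarith)
      _ = -(β / 2) := by ring
  have fract_pos : 0 < β - ⌊β⌋ := Int.fract_pos.2 (hβZ ⌊β⌋)
  have fract_le : β - ⌊β⌋ ≤ 1 := (Int.fract_lt_one β).le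
  intro x hx
  constructor
  · refine abs_add_lt_abs_of_lt_neg_half (by positivity) (hx.2.trans_eq ?_)
    field_simp
  · exact Set.Icc_subset_Icc (by gcongr) (by gcongr)
      (add_div_sq_mem_Icc (by positivity) fract_pos.le fract_le hx)
end
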